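/- Let u : ℝ² → ℝ be defined by u(x₁,x₂) = ∫₀^{|x₁|} √(1 - e^{-s}) ds for |x₁| ≥ 1 (extended smoothly for |x₁| < 1 with |φ'| < 1). Then the curve α(s) = (s, 0, u(s,0)) in the graph Σ(u) ⊂ ℝ³₁, with the induced Lorentzian-graph metric, has finite length: ∫_{-∞}^{∞} ‖α'(s)‖ ds < 2(1 + 2/√e). Hence there exists an entire spacelike graph in ℝ²×ℝ₁ that is not complete. -/

import Mathlib

open MeasureTheory

/-- The integrand of the paper. -/
noncomputable def ff (s : ℝ) : ℝ := Real.sqrt (1 - Real.exp (-s))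

/-- Its primitive. -/
noncomputable def FF (x : ℝ) : ℝ := ∫ s in (0:ℝ)..x, ff s

lemma ff_cont : Continuous ff := by unfold ff; fun_prop

lemma ff_nonneg (x : ℝ) : 0 ≤ ff x := Real.sqrt_nonneg _

lemma ff_zero {x : ℝ} (hx : x ≤ 0) : ff x = 0 := by
  unfold ff
  apply Real.sqrt_eq_zero_of_nonpos
  have := Real.one_le_exp (x := -x) (by linarith)
  linarith

lemma ff_mono : Monotone ff := by
  intro x y h
  unfold ff
  gcongr

lemma ff_sq {x : ℝ} (hx : 0 ≤ x) : ff x ^ 2 = 1 - Real.exp (-x) := by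
  unfold ff
  apply Real.sq_sqrt
  have := Real.exp_le_one_iff.2 (show -x ≤ 0 by linarith)
  linarith

lemma ff_lt_one (x : ℝ) : ff x < 1 := by
  unfold ff
  rw [Real.sqrt_lt' one_pos]
  have := Real.exp_pos (-x)
  linarith

lemma FF_deriv (x : ℝ) : HasDerivAt FF (ff x) x :=
  intervalIntegral.integral_hasDerivAt_right (ff_cont.intervalIntegrable _ _)
    (ff_cont.stronglyMeasurableAtFilter _ _) ff_cont.continuousAt

lemma FF_zero {x : ℝ} (hx : x ≤ 0) : FF x = 0 := by
  unfold FF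
  rw [intervalIntegral.integral_congr (g := fun _ => 0)]
  · simp
  · intro s hs
    rw [Set.uIcc_of_ge hx] at hs
    exact ff_zero hs.2

lemma FF_nonneg {x : ℝ} (hx : 0 ≤ x) : 0 ≤ FF x :=
  intervalIntegral.integral_nonneg hx fun s _ => ff_nonneg s

lemma FF_le {x : ℝ} (hx : 0 ≤ x) : FF x ≤ x * ff x := by
  have h := intervalIntegral.integral_mono_on (μ := volume) hx
    (ff_cont.intervalIntegrable _ _)
    (continuous_const.intervalIntegrable _ _ : IntervalIntegrable (fun _ => ff x) volume 0 x)
    (fun s hs => ff_mono hs.2)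
  simpa [FF] using h

lemma FF_smooth : ContDiffOn ℝ (⊤ : ℕ∞) FF (Set.Ioi 0) := by
  rw [show ((⊤ : ℕ∞) : WithTop ℕ∞) = (⊤ : ℕ∞) from rfl,
    contDiffOn_infty_iff_deriv_of_isOpen isOpen_Ioi]
  refine ⟨fun x _ => (FF_deriv x).differentiableAt.differentiableWithinAt, ?_⟩
  have : deriv FF = ff := funext fun x => (FF_deriv x).deriv
  rw [this]
  unfold ff
  apply ContDiffOn.sqrt
  · fun_prop
  · intro x hx
    have := Real.exp_lt_exp.2 (show -x < 0 by simpa using hx)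
    rw [Real.exp_zero] at this
    exact (by linarith : (0:ℝ) < 1 - Real.exp (-x)).ne'

lemma trans_deriv_bound : ∃ C : ℝ, 0 ≤ C ∧ ∀ x, |deriv Real.smoothTransition x| ≤ C := by
  have hc : Continuous (deriv Real.smoothTransition) :=
    (Real.smoothTransition.contDiff (n := 1)).continuous_deriv le_rfl
  obtain ⟨C, hC⟩ := (isCompact_Icc (a := (0:ℝ)) (b := 1)).exists_bound_of_continuousOn hc.continuousOn
  have h0 : 0 ≤ C := (norm_nonneg _).trans (hC 0 (by simp))
  refine ⟨C, h0, fun x => ?_⟩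
  by_cases hx : x ∈ Set.Icc (0:ℝ) 1
  · exact hC x hx
  · have : deriv Real.smoothTransition x = 0 := by
      rw [Set.mem_Icc, not_and_or, not_le, not_le] at hx
      rcases hx with hx | hx
      · have : Real.smoothTransition =ᶠ[nhds x] fun _ => 0 := by
          filter_upwards [Iio_mem_nhds hx] with y hy
          exact Real.smoothTransition.zero_of_nonpos (le_of_lt hy)
        rw [this.deriv_eq]; simp
      · have : Real.smoothTransition =ᶠ[nhds x] fun _ => 1 := by
          filter_upwards [Ioi_mem_nhds hx] with y hy
          exact Real.smoothTransition.one_of_one_le (le_of_lt hy)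
        rw [this.deriv_eq]; simp
    rw [this]; simpa using h0

lemma exists_g : ∃ g g' : ℝ → ℝ, ContDiff ℝ (⊤ : ℕ∞) g ∧ (∀ x, HasDerivAt g (g' x) x) ∧
    (∀ x, |g' x| < 1) ∧ (∀ x, x ≤ 0 → g x = 0) ∧ (∀ x, x ≤ 0 → g' x = 0) ∧
    (∀ x, 1/10 < x → g x = FF x) ∧ (∀ x, 1/10 < x → g' x = ff x) := by
  obtain ⟨C, hC0, hC⟩ := trans_deriv_bound
  obtain ⟨d, hd0, hd1, hd2⟩ : ∃ d : ℝ, 0 < d ∧ 2 * d ≤ 1/10 ∧ 2 * d * (1 + 2 * C)^2 < 1 := by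
    refine ⟨1 / (20 * (1 + 2*C)^2), by positivity, ?_, ?_⟩
    · have : (1:ℝ) ≤ (1 + 2*C)^2 := by nlinarith
      rw [← mul_div_assoc, div_le_iff₀ (by positivity)]
      linarith
    · have : (1 + 2*C) ≠ 0 := by positivity
      field_simp
      norm_num
  set χ : ℝ → ℝ := fun x => Real.smoothTransition (x / d - 1) with hχ
  set χ' : ℝ → ℝ := fun x => deriv Real.smoothTransition (x / d - 1) * (1 / d) with hχ'
  have hχs : ContDiff ℝ (⊤ : ℕ∞) χ := by
    apply Real.smoothTransition.contDiff.comp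
    fun_prop
  have hχd : ∀ x, HasDerivAt χ (χ' x) x := by
    intro x
    have h1 : HasDerivAt Real.smoothTransition (deriv Real.smoothTransition (x / d - 1)) (x/d - 1) :=
      ((Real.smoothTransition.contDiff (n := 1)).differentiable (by simp)).differentiableAt.hasDerivAt
    exact h1.comp x (((hasDerivAt_id x).div_const d).sub_const 1)
  have hχb : ∀ x, |χ' x| ≤ C / d := by
    intro x
    simp only [hχ', abs_mul, abs_of_pos (one_div_pos.2 hd0)]
    rw [div_eq_mul_one_div C d]
    gcongr
    exact hC _
  have hχ1 : ∀ x, 2 * d ≤ x → χ x = 1 := by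
    intro x hx
    apply Real.smoothTransition.one_of_one_le
    have : 2 ≤ x / d := by rwa [le_div_iff₀ hd0]
    linarith
  have hχ0 : ∀ x, x ≤ d → χ x = 0 := by
    intro x hx
    apply Real.smoothTransition.zero_of_nonpos
    have : x / d ≤ 1 := by rw [div_le_iff₀ hd0]; linarith
    linarith
  have hχ'1 : ∀ x, 2 * d < x → χ' x = 0 := by
    intro x hx
    have : χ =ᶠ[nhds x] fun _ => 1 := by
      filter_upwards [Ioi_mem_nhds hx] with y hy
      exact hχ1 y (le_of_lt hy)
    rw [← (hχd x).deriv, this.deriv_eq]; simp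
  have hχr : ∀ x, 0 ≤ χ x ∧ χ x ≤ 1 := fun x =>
    ⟨Real.smoothTransition.nonneg _, Real.smoothTransition.le_one _⟩
  refine ⟨fun x => χ x * FF x, fun x => χ' x * FF x + χ x * ff x, ?_, ?_, ?_, ?_, ?_, ?_, ?_⟩
  · rw [contDiff_iff_contDiffAt]
    intro x
    rcases le_or_gt x 0 with hx | hx
    · have : (fun x => χ x * FF x) =ᶠ[nhds x] fun _ => 0 := by
        filter_upwards [Iio_mem_nhds (lt_of_le_of_lt hx hd0)] with y hy
        rw [hχ0 y (le_of_lt hy), zero_mul]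
      exact contDiffAt_const.congr_of_eventuallyEq this
    · exact hχs.contDiffAt.mul (FF_smooth.contDiffAt (Ioi_mem_nhds hx))
  · exact fun x => (hχd x).mul (FF_deriv x)
  · intro x
    show |χ' x * FF x + χ x * ff x| < 1
    rcases le_or_gt x 0 with hx | hx
    · simp [FF_zero hx, ff_zero hx]
    rcases le_or_gt x (2*d) with hx2 | hx2
    · have h1 : |χ' x * FF x| ≤ 2 * C * ff (2*d) := by
        rw [abs_mul, abs_of_nonneg (FF_nonneg hx.le)]
        calc |χ' x| * FF x ≤ (C / d) * (2 * d * ff (2*d)) := by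
              apply mul_le_mul (hχb x) _ (FF_nonneg hx.le) (by positivity)
              refine (FF_le hx.le).trans ?_
              exact mul_le_mul hx2 (ff_mono hx2) (ff_nonneg _) (by positivity)
          _ = _ := by field_simp
      have h2 : |χ x * ff x| ≤ ff (2*d) := by
        rw [abs_mul, abs_of_nonneg (hχr x).1, abs_of_nonneg (ff_nonneg x)]
        nlinarith [(hχr x).2, ff_mono hx2, ff_nonneg x]
      have h3 : (1 + 2*C) * ff (2*d) < 1 := by
        have h4 : ff (2*d)^2 ≤ 2*d := by
          rw [ff_sq (by positivity)]
          have := Real.add_one_le_exp (-(2*d))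
          linarith
        have h5 : ((1 + 2*C) * ff (2*d))^2 < 1 := by
          rw [mul_pow]
          nlinarith [sq_nonneg (1 + 2*C)]
        exact (abs_lt.1 ((sq_lt_one_iff_abs_lt_one _).1 h5)).2
      have := abs_add_le (χ' x * FF x) (χ x * ff x)
      linarith
    · rw [hχ'1 x hx2, hχ1 x hx2.le, zero_mul, zero_add, one_mul, abs_of_nonneg (ff_nonneg x)]
      exact ff_lt_one x
  · intro x hx
    simp [FF_zero hx]
  · intro x hx
    simp [FF_zero hx, ff_zero hx]
  · intro x hx
    simp [hχ1 x (by linarith)]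
  · intro x hx
    simp [hχ1 x (by linarith), hχ'1 x (by linarith)]

/-- There is an entire spacelike graph in ℝ²×ℝ₁ (given by the function `u` of the paper,
which equals ∫₀^{|x₁|}√(1-e^{-s})ds for |x₁| ≥ 1) whose curve α(s) = (s,0,u(s,0)) has finite
induced length, bounded by 2(1+2/√e); hence the graph is not complete. -/
theorem stmt0 :
    ∃ u : ℝ × ℝ → ℝ, ContDiff ℝ (⊤ : ℕ∞) u ∧ (∀ x, ‖fderiv ℝ u x‖ < 1) ∧
      (∀ x : ℝ × ℝ, 1 ≤ |x.1| →
        u x = ∫ s in Set.Ioc (0 : ℝ) |x.1|, Real.sqrt (1 - Real.exp (-s))) ∧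
      ∫ s : ℝ, Real.sqrt (1 - (deriv (fun t : ℝ => u (t, 0)) s) ^ 2)
        < 2 * (1 + 2 / Real.sqrt (Real.exp 1)) := by
  obtain ⟨g, g', hg, hgd, hgb, hg0, hg'0, hg1, hg'1⟩ := exists_g
  have hd : ∀ x, HasDerivAt (fun t => g t + g (-t)) (g' x - g' (-x)) x := by
    intro x
    have := (hgd x).add ((hgd (-x)).comp x (hasDerivAt_neg x))
    rw [mul_neg_one, ← sub_eq_add_neg] at this
    exact this
  have hval : ∀ x : ℝ, 1/10 < |x| → g x + g (-x) = FF |x| := by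
    intro x hx
    rcases le_total 0 x with h | h
    · rw [abs_of_nonneg h] at hx ⊢
      rw [hg1 x hx, hg0 (-x) (by linarith), add_zero]
    · rw [abs_of_nonpos h] at hx ⊢
      rw [hg1 (-x) hx, hg0 x h, zero_add]
  have hder : ∀ x : ℝ, 1/10 < |x| → (g' x - g' (-x))^2 = 1 - Real.exp (-|x|) := by
    intro x hx
    rw [← ff_sq (abs_nonneg x)]
    rcases le_total 0 x with h | h
    · rw [abs_of_nonneg h] at hx ⊢
      rw [hg'1 x hx, hg'0 (-x) (by linarith), sub_zero]
    · rw [abs_of_nonpos h] at hx ⊢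
      rw [hg'1 (-x) hx, hg'0 x h, zero_sub, neg_sq]
  have hlt : ∀ x, |g' x - g' (-x)| < 1 := by
    intro x
    rcases le_total 0 x with h | h
    · rw [hg'0 (-x) (by linarith), sub_zero]; exact hgb x
    · rw [hg'0 x h, zero_sub, abs_neg]; exact hgb (-x)
  refine ⟨fun x => g x.1 + g (-x.1), ?_, ?_, ?_, ?_⟩
  · exact (hg.comp contDiff_fst).add (hg.comp contDiff_fst.neg)
  · intro x
    have h := (hd x.1).comp_hasFDerivAt x (hasFDerivAt_fst (𝕜 := ℝ) (p := x))
    have h' : fderiv ℝ (fun x : ℝ × ℝ => g x.1 + g (-x.1)) x = _ := h.fderiv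
    rw [h', norm_smul]
    have := ContinuousLinearMap.norm_fst_le ℝ ℝ ℝ
    calc _ ≤ ‖g' x.1 - g' (-x.1)‖ * 1 := by gcongr
      _ < 1 := by rw [mul_one]; exact hlt _
  · intro x hx
    show g x.1 + g (-x.1) = _
    rw [hval x.1 (by linarith), FF, intervalIntegral.integral_of_le (abs_nonneg _)]
    rfl
  · have hderiv : ∀ s, deriv (fun t : ℝ => g t + g (-t)) s = g' s - g' (-s) :=
      fun s => (hd s).deriv
    simp only [hderiv]
    have hint : Integrable (fun s : ℝ => Real.exp (1/20) * Real.exp (-(1/2) * |s|)) := by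
      apply Integrable.const_mul
      by_contra hn
      have h0 := integral_undef hn
      rw [integral_comp_abs (f := fun s : ℝ => Real.exp (-(1/2) * s)),
        integral_exp_mul_Ioi (by norm_num)] at h0
      norm_num at h0
    have hle : ∫ s : ℝ, Real.sqrt (1 - (g' s - g' (-s))^2) ≤
        ∫ s : ℝ, Real.exp (1/20) * Real.exp (-(1/2) * |s|) := by
      apply integral_mono_of_nonneg (ae_of_all _ fun s => Real.sqrt_nonneg _) hint
      refine ae_of_all _ fun s => ?_
      show Real.sqrt (1 - (g' s - g' (-s))^2) ≤ Real.exp (1/20) * Real.exp (-(1/2) * |s|)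
      rw [← Real.exp_add]
      rcases le_or_gt |s| (1/10) with hs | hs
      · calc _ ≤ (1:ℝ) := by
              rw [Real.sqrt_le_left zero_le_one]
              nlinarith [sq_nonneg (g' s - g' (-s))]
          _ ≤ _ := Real.one_le_exp (by linarith)
      · rw [hder s hs, sub_sub_cancel, ← Real.exp_half]
        apply Real.exp_le_exp.2
        linarith
    have hval2 : ∫ s : ℝ, Real.exp (1/20) * Real.exp (-(1/2) * |s|) = 4 * Real.exp (1/20) := by
      rw [integral_const_mul, integral_comp_abs (f := fun s : ℝ => Real.exp (-(1/2) * s)),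
        integral_exp_mul_Ioi (by norm_num)]
      norm_num
      ring
    have h1 : Real.exp (1/20) < 1.06 := by
      have := Real.exp_bound_div_one_sub_of_interval' (x := 1/20) (by norm_num) (by norm_num)
      norm_num at this ⊢
      linarith
    have h2 : 0.6 ≤ 1 / Real.sqrt (Real.exp 1) := by
      have h3 : Real.sqrt (Real.exp 1) ≤ 5/3 := by
        rw [Real.sqrt_le_left (by norm_num)]
        have := Real.exp_one_lt_d9
        norm_num at this ⊢
        linarith
      rw [le_div_iff₀ (Real.sqrt_pos.2 (Real.exp_pos _))]
      linarith
    have h4 : 2 / Real.sqrt (Real.exp 1) = 2 * (1 / Real.sqrt (Real.exp 1)) := by ring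
    rw [h4]
    rw [hval2] at hle
    norm_num at h1 h2 hle ⊢
    linarith
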